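/- Let W be a real symmetric n×n matrix that is positive semidefinite, stochastic (entrywise nonnegative with each row summing to 1), and irreducible, and let A be a nonzero real m×n matrix with A𝟙 ≠ 0, and b ∈ ℝ^m. Fix γ with 0 < γ < 1/λ_max(AᵀA), and let α_k = (t_k − 1)/t_{k+1} where t₁ = 1 and t_{k+1} = (1 + √(1 + 4t_k²))/2. Then there exists a unique x* ∈ ℝ^n such that for every initialization x₀ ∈ ℝ^n, the PnP-FISTA iterates defined by y₁ = x₀ and, for k ≥ 1, x_k = W(y_k − γAᵀ(A y_k − b)) and y_{k+1} = x_k + α_k(x_k − x_{k−1}), converge linearly to x*: there exist C > 0, β ∈ [0,1), and K ≥ 1 such that ‖x_k − x*‖₂ ≤ C·β^k for all k ≥ K. -/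

import Mathlib

open Filter Matrix

/-- The Euclidean (ℓ²) norm on `Fin n → ℝ`. -/
noncomputable def norm2 {n : ℕ} (x : Fin n → ℝ) : ℝ := Real.sqrt (∑ i, x i ^ 2)

/-- The largest eigenvalue of a real (symmetric) matrix, as the supremum of its real
spectrum. -/
noncomputable def lamMax {n : ℕ} (S : Matrix (Fin n) (Fin n) ℝ) : ℝ := sSup (spectrum ℝ S)

/-!
Put `M = 1 - γ AᵀA`, so that one step is `x k = W (M (y k)) + const` with `0 ≤ W ≤ 1` and
`0 ≤ M ≤ 1` in the Loewner order. An eigenvector of `W M` for an eigenvalue `p ≥ 1` loses no length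
under either factor, hence is fixed by both: by irreducibility of `W` it is constant, and it lies in
the kernel of `A`, which contains no nonzero constant vector. Thus `1 - W M` is invertible, giving
the limit, and writing `W = Bᴴ B` the symmetric matrix `B M Bᴴ` has its spectrum in `[0, 1)`.
Diagonalizing it turns the error recursion into the scalar recursions
`r (k + 2) = p (r (k + 1) + a k (r (k + 1) - r k))` with `0 ≤ p < 1`, for which a quadratic energy
shrinks by the factor `1 / (2 - p)` at each step, whatever the momentum `a k ∈ [0, 1]`.
-/

open Asymptotics Set
open scoped Topology MatrixOrder

section GeometricDecay

variable {E : Type*} [NormedAddCommGroup E]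

/-- Linear convergence to zero: `f` is bounded by a multiple of `β ^ k` for some ratio `β < 1`.
The ratio is taken positive, which loses nothing and lets `β ^ k` be divided by. -/
def GeometricDecay (f : ℕ → E) : Prop :=
  ∃ β ∈ Ioo (0 : ℝ) 1, f =O[atTop] fun k => β ^ k

namespace GeometricDecay

lemma tendsto_zero {f : ℕ → E} (hf : GeometricDecay f) : Tendsto f atTop (𝓝 0) := by
  obtain ⟨β, hβ, hf⟩ := hf
  exact hf.trans_tendsto (tendsto_pow_atTop_nhds_zero_of_lt_one hβ.1.le hβ.2)

lemma of_comp_add {f : ℕ → E} (m : ℕ) (hf : GeometricDecay fun k => f (k + m)) :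
    GeometricDecay f := by
  obtain ⟨β, hβ, hf⟩ := hf
  refine ⟨β, hβ, ?_⟩
  rw [← map_add_atTop_eq_nat m, isBigO_map]
  refine hf.trans ?_
  simpa only [Function.comp_def, pow_add, mul_comm _ (β ^ m)] using
    isBigO_self_const_mul (pow_pos hβ.1 m).ne' (fun k => β ^ k) atTop

lemma pi {ι : Type*} [Fintype ι] {f : ℕ → ι → E} (hf : ∀ i, GeometricDecay fun k => f k i) :
    GeometricDecay f := by
  choose β hβ hf using hf
  have : Nonempty (Ioo (0 : ℝ) 1) := ⟨⟨1 / 2, by norm_num⟩⟩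
  obtain ⟨⟨γ, hγ⟩, hle⟩ := Finite.exists_le fun i => (⟨β i, hβ i⟩ : Ioo (0 : ℝ) 1)
  exact ⟨γ, hγ, isBigO_pi.2 fun i =>
    (hf i).trans (isBigO_pow_pow_of_le_left (hβ i).1.le (hle i))⟩

lemma mulVec {m n : Type*} [Fintype m] [Fintype n] {f : ℕ → n → ℝ} (hf : GeometricDecay f)
    (A : Matrix m n ℝ) : GeometricDecay fun k => A *ᵥ f k := by
  obtain ⟨β, hβ, hf⟩ := hf
  exact ⟨β, hβ, (A.mulVecLin.toContinuousLinearMap.isBigO_comp f atTop).trans hf⟩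

end GeometricDecay

lemma norm2_eq_norm_toLp {n : ℕ} (v : Fin n → ℝ) : norm2 v = ‖WithLp.toLp 2 v‖ := by
  simp [norm2, EuclideanSpace.norm_eq]

lemma isBigO_norm2_iff {n : ℕ} {v : ℕ → Fin n → ℝ} {g : ℕ → ℝ} :
    (fun k => norm2 (v k)) =O[atTop] g ↔ v =O[atTop] g := by
  let e := (PiLp.continuousLinearEquiv 2 ℝ fun _ : Fin n => ℝ).symm
  simp only [norm2_eq_norm_toLp, isBigO_norm_left]
  exact ⟨(e.isBigO_comp_rev v atTop).trans, (e.isBigO_comp v atTop).trans⟩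

lemma geometricDecay_iff_norm2_le {n : ℕ} {v : ℕ → Fin n → ℝ} :
    GeometricDecay v ↔ ∃ C, 0 < C ∧ ∃ β, 0 ≤ β ∧ β < 1 ∧ ∃ K, 1 ≤ K ∧ ∀ k, K ≤ k →
      norm2 (v k) ≤ C * β ^ k := by
  constructor
  · rintro ⟨β, ⟨hβ₀, hβ₁⟩, hv⟩
    obtain ⟨C, hC, hbound⟩ := (isBigO_norm2_iff.2 hv).exists_pos
    obtain ⟨K, hK⟩ := eventually_atTop.1 hbound.bound
    refine ⟨C, hC, β, hβ₀.le, hβ₁, max K 1, le_max_right _ _, fun k hk => ?_⟩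
    refine (Real.le_norm_self _).trans ((hK k (le_of_max_le_left hk)).trans_eq ?_)
    rw [norm_pow, Real.norm_of_nonneg hβ₀.le]
  · rintro ⟨C, -, β, hβ₀, hβ₁, K, -, hbound⟩
    have hv : (fun k => norm2 (v k)) =O[atTop] fun k => β ^ k :=
      .of_bound C <| (eventually_ge_atTop K).mono fun k hk => by
        have hnorm : 0 ≤ norm2 (v k) := Real.sqrt_nonneg _
        rw [Real.norm_of_nonneg hnorm, Real.norm_of_nonneg (pow_nonneg hβ₀ k)]
        exact hbound k hk
    exact ⟨max β (1 / 2), ⟨lt_max_of_lt_right (by norm_num), max_lt hβ₁ (by norm_num)⟩,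
      (isBigO_norm2_iff.1 hv).trans (isBigO_pow_pow_of_le_left hβ₀ (le_max_left β (1 / 2)))⟩

end GeometricDecay

section Momentum

-- The weight `(1 - p) * (2 - p)` makes the gap between the two sides a sum of nonnegative terms
-- for every `a`.
lemma momentum_energy_step {p a : ℝ} (hp : p ∈ Ico (0 : ℝ) 1) (ha : a ∈ Icc (0 : ℝ) 1)
    (s d : ℝ) :
    (2 - p) * ((1 - p) * (2 - p) * (p * (s + a * d)) ^ 2 + (p * (s + a * d) - s) ^ 2) ≤
      (1 - p) * (2 - p) * s ^ 2 + d ^ 2 := by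
  have h₁ : 0 ≤ 1 - p := by linarith [hp.2]
  have h₂ : 0 ≤ 2 - p := by linarith
  have h₃ : 0 ≤ 1 - a ^ 2 := by nlinarith [ha.1, ha.2]
  have hgap : 0 ≤ (1 - a ^ 2) * d ^ 2 + ((1 - p) * a * d) ^ 2
      + p * (2 - p) * (1 - p) ^ 3 * (s + a * d) ^ 2 := by
    have := hp.1
    positivity
  linear_combination hgap

lemma GeometricDecay.of_momentum_scalar {p : ℝ} (hp : p ∈ Ico (0 : ℝ) 1) {a r : ℕ → ℝ}
    (ha : ∀ k, a k ∈ Icc (0 : ℝ) 1)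
    (hr : ∀ k, r (k + 2) = p * (r (k + 1) + a k * (r (k + 1) - r k))) : GeometricDecay r := by
  have h₁ : 0 < 1 - p := sub_pos.2 hp.2
  have h₂ : 1 < 2 - p := by linarith
  let c := (1 - p) * (2 - p)
  have hc : 0 < c := by positivity
  let energy k := c * r (k + 1) ^ 2 + (r (k + 1) - r k) ^ 2
  have hstep k : energy (k + 1) ≤ (2 - p)⁻¹ * energy k := by
    rw [le_inv_mul_iff₀ (by linarith)]
    simpa only [energy, c, hr] using
      momentum_energy_step hp (ha k) (r (k + 1)) (r (k + 1) - r k)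
  have henergy k : energy k ≤ (2 - p)⁻¹ ^ k * energy 0 :=
    le_geom (by positivity) k fun j _ => hstep j
  refine .of_comp_add 1 ⟨√(2 - p)⁻¹, ⟨by positivity, ?_⟩, .of_pow two_ne_zero ?_⟩
  · rw [Real.sqrt_lt' one_pos, one_pow]
    exact inv_lt_one_of_one_lt₀ h₂
  · refine .of_bound (energy 0 / c) (.of_forall fun k => ?_)
    have hsq : c * r (k + 1) ^ 2 ≤ (2 - p)⁻¹ ^ k * energy 0 :=
      (le_add_of_nonneg_right (sq_nonneg _)).trans (henergy k)
    simp only [Pi.pow_apply]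
    rw [Real.norm_of_nonneg (sq_nonneg _), Real.norm_of_nonneg (by positivity), pow_right_comm,
      Real.sq_sqrt (by positivity), div_mul_eq_mul_div, le_div_iff₀ hc]
    linarith

variable {ι : Type*} [Fintype ι] [DecidableEq ι]

lemma GeometricDecay.of_momentum_posSemidef {P : Matrix ι ι ℝ} (hP : P.PosSemidef)
    (hP1 : ∀ p ∈ spectrum ℝ P, p < 1) {a : ℕ → ℝ} (ha : ∀ k, a k ∈ Icc (0 : ℝ) 1)
    {g : ℕ → ι → ℝ} (hg : ∀ k, g (k + 2) = P *ᵥ (g (k + 1) + a k • (g (k + 1) - g k))) :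
    GeometricDecay g := by
  let p := hP.isHermitian.eigenvalues
  let U : Matrix ι ι ℝ := (hP.isHermitian.eigenvectorUnitary : Matrix ι ι ℝ)
  have hUU : U * star U = 1 := Unitary.coe_mul_star_self _
  have hUP : star U * P = diagonal p * star U := by
    have hspec : P = U * diagonal p * star U := hP.isHermitian.spectral_theorem
    rw [hspec, ← mul_assoc, ← mul_assoc, Unitary.coe_star_mul_self, one_mul]
  have hcoord : GeometricDecay fun k => star U *ᵥ g k := by
    refine .pi fun i => .of_momentum_scalar ⟨hP.eigenvalues_nonneg i,
      hP1 _ (hP.isHermitian.eigenvalues_mem_spectrum_real i)⟩ ha fun k => ?_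
    rw [hg k, mulVec_mulVec, hUP, ← mulVec_mulVec, mulVec_diagonal, mulVec_add, mulVec_smul,
      mulVec_sub]
    rfl
  simpa only [mulVec_mulVec, hUU, one_mulVec] using hcoord.mulVec U

end Momentum

section ProductOfContractions

variable {ι : Type*} [Fintype ι]

lemma dotProduct_mulVec_mono {S T : Matrix ι ι ℝ} (h : S ≤ T) (v : ι → ℝ) :
    v ⬝ᵥ S *ᵥ v ≤ v ⬝ᵥ T *ᵥ v := by
  simpa [sub_mulVec, dotProduct_sub] using (Matrix.le_iff.1 h).dotProduct_mulVec_nonneg v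

variable [DecidableEq ι]

lemma hasEigenvalue_toLin'_of_mem_spectrum {S : Matrix ι ι ℝ} {p : ℝ} (hp : p ∈ spectrum ℝ S) :
    Module.End.HasEigenvalue (toLin' S) p :=
  Module.End.hasEigenvalue_iff_mem_spectrum.2 (by rwa [spectrum_toLin'])

lemma sq_le_self_of_mem_Icc {S : Matrix ι ι ℝ} (hS : S ∈ Icc 0 1) : S ^ 2 ≤ S := by
  have hS₀ : S.PosSemidef := hS.1.posSemidef
  have hS₁ : (1 - S).PosSemidef := Matrix.le_iff.1 hS.2
  have hsum := (hS₁.mul_mul_conjTranspose_same S).add (hS₀.mul_mul_conjTranspose_same (1 - S))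
  rw [hS₀.isHermitian.eq, hS₁.isHermitian.eq] at hsum
  have hgap : S * (1 - S) * S + (1 - S) * S * (1 - S) = S - S ^ 2 := by noncomm_ring
  exact Matrix.le_iff.2 (hgap ▸ hsum)

lemma dotProduct_mulVec_le_self {S : Matrix ι ι ℝ} (hS : S ≤ 1) (v : ι → ℝ) :
    v ⬝ᵥ S *ᵥ v ≤ v ⬝ᵥ v := by
  simpa using dotProduct_mulVec_mono hS v

lemma mulVec_dotProduct_self_le {S : Matrix ι ι ℝ} (hS : S ∈ Icc 0 1) (v : ι → ℝ) :
    S *ᵥ v ⬝ᵥ S *ᵥ v ≤ v ⬝ᵥ S *ᵥ v := by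
  have hSt : Sᵀ = S := hS.1.posSemidef.isHermitian
  calc S *ᵥ v ⬝ᵥ S *ᵥ v = v ⬝ᵥ S ^ 2 *ᵥ v := by
        rw [sq, ← mulVec_mulVec, dotProduct_mulVec v, ← mulVec_transpose, hSt]
    _ ≤ v ⬝ᵥ S *ᵥ v := dotProduct_mulVec_mono (sq_le_self_of_mem_Icc hS) v

lemma mulVec_eq_self_of_dotProduct_le {S : Matrix ι ι ℝ} (hS : S ≤ 1) {v : ι → ℝ}
    (hv : v ⬝ᵥ v ≤ v ⬝ᵥ S *ᵥ v) : S *ᵥ v = v := by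
  have hzero : v ⬝ᵥ (1 - S) *ᵥ v = 0 := by
    rw [sub_mulVec, dotProduct_sub, one_mulVec, sub_eq_zero]
    exact hv.antisymm (dotProduct_mulVec_le_self hS v)
  have hfix : (1 - S) *ᵥ v = 0 := ((Matrix.le_iff.1 hS).dotProduct_mulVec_zero_iff v).1 hzero
  rwa [sub_mulVec, one_mulVec, sub_eq_zero, eq_comm] at hfix

variable {S T : Matrix ι ι ℝ}

lemma mulVec_eq_self_of_mul_mulVec_eq_smul (hS : S ∈ Icc 0 1) (hT : T ∈ Icc 0 1) {p : ℝ}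
    (hp : 1 ≤ p) {u : ι → ℝ} (hu : (S * T) *ᵥ u = p • u) : S *ᵥ u = u ∧ T *ᵥ u = u := by
  rw [← mulVec_mulVec] at hu
  have huu : 0 ≤ u ⬝ᵥ u := dotProduct_self_star_nonneg u
  have hTu : T *ᵥ u = u := by
    refine mulVec_eq_self_of_dotProduct_le hT.2 ?_
    calc u ⬝ᵥ u ≤ p * p * (u ⬝ᵥ u) :=
          le_mul_of_one_le_left huu (one_le_mul_of_one_le_of_one_le hp hp)
      _ = S *ᵥ T *ᵥ u ⬝ᵥ S *ᵥ T *ᵥ u := by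
        rw [hu, smul_dotProduct, dotProduct_smul, smul_eq_mul, smul_eq_mul, mul_assoc]
      _ ≤ T *ᵥ u ⬝ᵥ S *ᵥ T *ᵥ u := mulVec_dotProduct_self_le hS _
      _ ≤ T *ᵥ u ⬝ᵥ T *ᵥ u := dotProduct_mulVec_le_self hS.2 _
      _ ≤ u ⬝ᵥ T *ᵥ u := mulVec_dotProduct_self_le hT u
  refine ⟨mulVec_eq_self_of_dotProduct_le hS.2 ?_, hTu⟩
  rw [hTu] at hu
  rw [hu, dotProduct_smul]
  exact le_mul_of_one_le_left huu hp

lemma isUnit_one_sub_mul (hS : S ∈ Icc 0 1) (hT : T ∈ Icc 0 1)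
    (hST : ∀ u, S *ᵥ u = u → T *ᵥ u = u → u = 0) : IsUnit (1 - S * T) := by
  rw [← mulVec_injective_iff_isUnit]
  refine (injective_iff_map_eq_zero (1 - S * T).mulVecLin).2 fun u hu => ?_
  rw [mulVecLin_apply, sub_mulVec, one_mulVec, sub_eq_zero] at hu
  have hfix := mulVec_eq_self_of_mul_mulVec_eq_smul hS hT le_rfl
    (hu.symm.trans (one_smul ℝ u).symm)
  exact hST u hfix.1 hfix.2

lemma lt_one_of_mem_spectrum_mul_mul_conjTranspose (hS : S ∈ Icc 0 1) (hT : T ∈ Icc 0 1)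
    (hST : ∀ u, S *ᵥ u = u → T *ᵥ u = u → u = 0) {B : Matrix ι ι ℝ} (hB : S = Bᴴ * B)
    {p : ℝ} (hp : p ∈ spectrum ℝ (B * T * Bᴴ)) : p < 1 := by
  by_contra! hp1
  obtain ⟨v, hv⟩ := (hasEigenvalue_toLin'_of_mem_spectrum hp).exists_hasEigenvector
  have hpv : (B * T * Bᴴ) *ᵥ v = p • v := hv.apply_eq_smul
  have heigen : (S * T) *ᵥ Bᴴ *ᵥ v = p • Bᴴ *ᵥ v := by
    rw [← mulVec_smul, ← hpv]
    simp only [mulVec_mulVec, hB, mul_assoc]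
  have hfix := mulVec_eq_self_of_mul_mulVec_eq_smul hS hT hp1 heigen
  have hBv : Bᴴ *ᵥ v = 0 := hST _ hfix.1 hfix.2
  rw [← mulVec_mulVec, hBv, mulVec_zero, eq_comm, smul_eq_zero] at hpv
  exact hpv.elim (by positivity) hv.2

lemma GeometricDecay.of_momentum_mul (hS : S ∈ Icc 0 1) (hT : T ∈ Icc 0 1)
    (hST : ∀ u, S *ᵥ u = u → T *ᵥ u = u → u = 0)
    {a : ℕ → ℝ} (ha : ∀ k, a k ∈ Icc (0 : ℝ) 1) {e : ℕ → ι → ℝ}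
    (he : ∀ k, e (k + 2) = (S * T) *ᵥ (e (k + 1) + a k • (e (k + 1) - e k))) :
    GeometricDecay e := by
  obtain ⟨B, hB⟩ := CStarAlgebra.nonneg_iff_eq_star_mul_self.1 hS.1
  let g k := (B * T) *ᵥ (e (k + 1) + a k • (e (k + 1) - e k))
  have heg k : e (k + 2) = Bᴴ *ᵥ g k := by
    rw [he, hB, mulVec_mulVec, ← mul_assoc]
    rfl
  have hg k : g (k + 2) = (B * T * Bᴴ) *ᵥ (g (k + 1) + a (k + 2) • (g (k + 1) - g k)) := by
    rw [← mulVec_mulVec, mulVec_add, mulVec_smul, mulVec_sub, ← heg, ← heg]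
  have hdecay : GeometricDecay g :=
    .of_momentum_posSemidef (hT.1.posSemidef.mul_mul_conjTranspose_same B)
      (fun _ => lt_one_of_mem_spectrum_mul_mul_conjTranspose hS hT hST hB)
      (fun k => ha (k + 2)) hg
  refine .of_comp_add 2 ?_
  simpa only [heg] using hdecay.mulVec Bᴴ

lemma exists_geometricDecay_sub_of_momentum (hS : S ∈ Icc 0 1) (hT : T ∈ Icc 0 1)
    (hST : ∀ u, S *ᵥ u = u → T *ᵥ u = u → u = 0) (c : ι → ℝ) :
    ∃ xs, ∀ a : ℕ → ℝ, (∀ k, a k ∈ Icc (0 : ℝ) 1) → ∀ x : ℕ → ι → ℝ,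
      (∀ k, x (k + 2) = (S * T) *ᵥ (x (k + 1) + a k • (x (k + 1) - x k)) + c) →
      GeometricDecay fun k => x k - xs := by
  obtain ⟨xs, hxs⟩ := mulVec_surjective_iff_isUnit.2 (isUnit_one_sub_mul hS hT hST) c
  refine ⟨xs, fun a ha x hx => .of_momentum_mul hS hT hST ha fun k => ?_⟩
  rw [hx, ← hxs, sub_sub_sub_cancel_right, sub_add_eq_add_sub, mulVec_sub, sub_mulVec, one_mulVec]
  abel

end ProductOfContractions

section Stochastic

variable {ι : Type*} [Fintype ι] [DecidableEq ι] {W : Matrix ι ι ℝ}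

lemma le_one_of_mem_spectrum_of_mem_rowStochastic (hW : W ∈ rowStochastic ℝ ι) {p : ℝ}
    (hp : p ∈ spectrum ℝ W) : p ≤ 1 := by
  obtain ⟨i, hi⟩ := eigenvalue_mem_ball (hasEigenvalue_toLin'_of_mem_spectrum hp)
  have habs : ∑ j ∈ Finset.univ.erase i, ‖W i j‖ = ∑ j ∈ Finset.univ.erase i, W i j :=
    Finset.sum_congr rfl fun j _ => Real.norm_of_nonneg (nonneg_of_mem_rowStochastic hW)
  rw [Real.closedBall_eq_Icc, habs, Finset.add_sum_erase _ _ (Finset.mem_univ i),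
    sum_row_of_mem_rowStochastic hW] at hi
  exact hi.2

lemma matrix_le_one_of_mem_rowStochastic (hW : W ∈ rowStochastic ℝ ι) (hsymm : W.IsHermitian) :
    W ≤ 1 :=
  CFC.le_one (fun _ => le_one_of_mem_spectrum_of_mem_rowStochastic hW) hsymm.isSelfAdjoint

lemma eq_of_mulVec_eq_self_of_isIrreducible (hW : W ∈ rowStochastic ℝ ι) (hirr : W.IsIrreducible)
    {u : ι → ℝ} (hu : W *ᵥ u = u) (i j : ι) : u i = u j := by
  have : Nonempty ι := ⟨i⟩
  obtain ⟨l, hl⟩ := Finite.exists_max u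
  suffices h : ∀ j, u l = u j from (h i).symm.trans (h j)
  intro j
  have hpow k : (W ^ k) *ᵥ u = u := by
    induction k with
    | zero => simp
    | succ k ih => rw [pow_succ, ← mulVec_mulVec, hu, ih]
  obtain ⟨k, -, hk⟩ := (isIrreducible_iff_exists_pow_pos hirr.nonneg).1 hirr l j
  have hWk : W ^ k ∈ rowStochastic ℝ ι := pow_mem hW k
  have hsum : ∑ q, (W ^ k) l q * (u l - u q) = 0 := by
    have hul : ∑ q, (W ^ k) l q * u q = u l := congrFun (hpow k) l
    simp only [mul_sub, Finset.sum_sub_distrib, ← Finset.sum_mul, hul,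
      sum_row_of_mem_rowStochastic hWk, one_mul, sub_self]
  have hterm : (W ^ k) l j * (u l - u j) = 0 :=
    (Finset.sum_eq_zero_iff_of_nonneg fun q _ => mul_nonneg (nonneg_of_mem_rowStochastic hWk)
      (sub_nonneg.2 (hl q))).1 hsum j (Finset.mem_univ j)
  exact sub_eq_zero.1 ((mul_eq_zero.1 hterm).resolve_left hk.ne')

lemma eq_zero_of_mulVec_eq_self_of_mulVec_eq_zero {κ : Type*} (hW : W ∈ rowStochastic ℝ ι)
    (hirr : W.IsIrreducible) {A : Matrix κ ι ℝ} (hA1 : A *ᵥ (fun _ => 1) ≠ 0) {u : ι → ℝ}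
    (hu : W *ᵥ u = u) (hAu : A *ᵥ u = 0) : u = 0 := by
  funext i
  have hconst : u = u i • fun _ => 1 := by
    funext j
    simpa using eq_of_mulVec_eq_self_of_isIrreducible hW hirr hu j i
  rw [hconst, mulVec_smul] at hAu
  exact (smul_eq_zero.1 hAu).resolve_right hA1

end Stochastic

section GradientStep

variable {n m : ℕ} {A : Matrix (Fin m) (Fin n) ℝ} {γ : ℝ}

lemma mul_lamMax_le_one_of_lt_one_div (hγ : γ < 1 / lamMax (Aᵀ * A)) :
    γ * lamMax (Aᵀ * A) ≤ 1 := by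
  have hATA : (Aᵀ * A).PosSemidef := posSemidef_conjTranspose_mul_self A
  have hspec := (posSemidef_iff_isHermitian_and_spectrum_nonneg.1 hATA).2
  exact mul_le_of_le_div₀ zero_le_one (Real.sSup_nonneg fun _ hp => hspec hp) hγ.le

lemma one_sub_smul_mem_Icc {S : Matrix (Fin n) (Fin n) ℝ} (hS : S.PosSemidef) (hγ₀ : 0 ≤ γ)
    (hγ : γ * lamMax S ≤ 1) : 1 - γ • S ∈ Icc 0 1 := by
  have hle : S ≤ algebraMap ℝ _ (lamMax S) :=
    le_algebraMap_of_spectrum_le (fun _ => le_csSup (finite_spectrum S).bddAbove)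
      hS.isHermitian.isSelfAdjoint
  have hle_one : γ • S ≤ 1 := calc
    γ • S ≤ γ • algebraMap ℝ _ (lamMax S) := smul_le_smul_of_nonneg_left hle hγ₀
    _ = (γ * lamMax S) • 1 := by rw [Algebra.algebraMap_eq_smul_one, smul_smul]
    _ ≤ (1 : ℝ) • 1 := smul_le_smul_of_nonneg_right hγ zero_le_one
    _ = 1 := one_smul ℝ 1
  exact ⟨sub_nonneg.2 hle_one, sub_le_self 1 (smul_nonneg hγ₀ hS.nonneg)⟩

lemma sub_smul_gradient_eq (b : Fin m → ℝ) (v : Fin n → ℝ) :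
    v - γ • (Aᵀ *ᵥ (A *ᵥ v - b)) = (1 - γ • (Aᵀ * A)) *ᵥ v + γ • Aᵀ *ᵥ b := by
  rw [sub_mulVec, one_mulVec, smul_mulVec, ← mulVec_mulVec, mulVec_sub, smul_sub]
  abel

lemma mulVec_eq_zero_of_one_sub_smul_mulVec_eq_self (hγ : γ ≠ 0) {u : Fin n → ℝ}
    (hu : (1 - γ • (Aᵀ * A)) *ᵥ u = u) : A *ᵥ u = 0 := by
  rw [sub_mulVec, one_mulVec, sub_eq_self, smul_mulVec, smul_eq_zero] at hu
  simpa using (conjTranspose_mul_self_mulVec_eq_zero A u).1 (hu.resolve_left hγ)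

end GradientStep

section Fista

lemma le_fista_succ (s : ℝ) : s ≤ (1 + √(1 + 4 * s ^ 2)) / 2 := by
  have : 2 * s ≤ √(1 + 4 * s ^ 2) := Real.le_sqrt_of_sq_le (by nlinarith)
  linarith

lemma fista_momentum_mem_Icc {t α : ℕ → ℝ} (ht1 : t 1 = 1)
    (ht : ∀ k, 1 ≤ k → t (k + 1) = (1 + √(1 + 4 * t k ^ 2)) / 2)
    (hα : ∀ k, 1 ≤ k → α k = (t k - 1) / t (k + 1)) {k : ℕ} (hk : 1 ≤ k) :
    α k ∈ Icc (0 : ℝ) 1 := by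
  have hmono {k} (hk : 1 ≤ k) : t k ≤ t (k + 1) := (ht k hk).symm ▸ le_fista_succ (t k)
  have htk : 1 ≤ t k := by
    induction k, hk using Nat.le_induction with
    | base => exact ht1.ge
    | succ k hk ih => exact ih.trans (hmono hk)
  have htk' := hmono hk
  rw [hα k hk]
  exact ⟨div_nonneg (by linarith) (by linarith), div_le_one_of_le₀ (by linarith) (by linarith)⟩

lemma exists_momentum_iterates {V : Type*} [AddCommGroup V] [Module ℝ V] (F : V → V)
    (α : ℕ → ℝ) :
    ∃ x y : ℕ → V, y 1 = x 0 ∧ (∀ k, 1 ≤ k → x k = F (y k)) ∧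
      ∀ k, 1 ≤ k → y (k + 1) = x k + α k • (x k - x (k - 1)) := by
  let state : ℕ → V × V := fun k =>
    k.rec (0, 0) fun j q => (F q.2, F q.2 + α (j + 1) • (F q.2 - q.1))
  refine ⟨fun k => (state k).1, fun k => (state (k - 1)).2, rfl, ?_, ?_⟩ <;>
  · rintro (_ | k) hk
    · contradiction
    · rfl

end Fista

theorem stmt16_general {n m : ℕ} {W : Matrix (Fin n) (Fin n) ℝ} (hW : W ∈ Icc 0 1)
    {A : Matrix (Fin m) (Fin n) ℝ} (hWA : ∀ u, W *ᵥ u = u → A *ᵥ u = 0 → u = 0)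
    (b : Fin m → ℝ) {γ : ℝ} (hγ0 : 0 < γ) (hγ1 : γ * lamMax (Aᵀ * A) ≤ 1)
    {α : ℕ → ℝ} (hα : ∀ k, 1 ≤ k → α k ∈ Icc (0 : ℝ) 1) :
    ∃! xs : Fin n → ℝ,
      ∀ x y : ℕ → Fin n → ℝ,
        y 1 = x 0 →
        (∀ k, 1 ≤ k → x k = W *ᵥ (y k - γ • (Aᵀ *ᵥ (A *ᵥ y k - b)))) →
        (∀ k, 1 ≤ k → y (k + 1) = x k + α k • (x k - x (k - 1))) →
        ∃ C, 0 < C ∧ ∃ β, 0 ≤ β ∧ β < 1 ∧ ∃ K, 1 ≤ K ∧ ∀ k, K ≤ k →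
          norm2 (x k - xs) ≤ C * β ^ k := by
  have hstep : 1 - γ • (Aᵀ * A) ∈ Icc 0 1 :=
    one_sub_smul_mem_Icc (posSemidef_conjTranspose_mul_self A) hγ0.le hγ1
  obtain ⟨xs, hxs⟩ := exists_geometricDecay_sub_of_momentum hW hstep
    (fun u hWu hAu => hWA u hWu (mulVec_eq_zero_of_one_sub_smul_mulVec_eq_self hγ0.ne' hAu))
    (W *ᵥ (γ • Aᵀ *ᵥ b))
  simp only [← geometricDecay_iff_norm2_le]
  have hlim (x y : ℕ → Fin n → ℝ)
      (hx : ∀ k, 1 ≤ k → x k = W *ᵥ (y k - γ • (Aᵀ *ᵥ (A *ᵥ y k - b))))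
      (hy : ∀ k, 1 ≤ k → y (k + 1) = x k + α k • (x k - x (k - 1))) :
      GeometricDecay fun k => x k - xs := by
    refine hxs (fun k => α (k + 1)) (fun k => hα _ k.succ_pos) x fun k => ?_
    have hyk : y (k + 2) = x (k + 1) + α (k + 1) • (x (k + 1) - x k) := hy (k + 1) k.succ_pos
    rw [hx (k + 2) (by lia), hyk, sub_smul_gradient_eq, mulVec_add, mulVec_mulVec]
  refine ⟨xs, fun x y _ hx hy => hlim x y hx hy, fun zs hzs => ?_⟩
  obtain ⟨x, y, h1, hx, hy⟩ := exists_momentum_iterates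
    (fun v => W *ᵥ (v - γ • (Aᵀ *ᵥ (A *ᵥ v - b)))) α
  exact tendsto_nhds_unique (tendsto_sub_nhds_zero_iff.1 (hzs x y h1 hx hy).tendsto_zero)
    (tendsto_sub_nhds_zero_iff.1 (hlim x y hx hy).tendsto_zero)

theorem stmt16 (n m : ℕ) (W : Matrix (Fin n) (Fin n) ℝ)
    (hW : W.PosSemidef)
    (hnonneg : ∀ i j, 0 ≤ W i j) (hrow : ∀ i, ∑ j, W i j = 1)
    (hirr : ∀ i j, ∃ k : ℕ, 0 < k ∧ 0 < (W ^ k) i j)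
    (A : Matrix (Fin m) (Fin n) ℝ) (hA : A ≠ 0)
    (hA1 : A *ᵥ (fun _ => (1 : ℝ)) ≠ 0)
    (b : Fin m → ℝ)
    (γ : ℝ) (hγ0 : 0 < γ) (hγ1 : γ < 1 / lamMax (Aᵀ * A))
    (t α : ℕ → ℝ) (ht1 : t 1 = 1)
    (ht : ∀ k, 1 ≤ k → t (k + 1) = (1 + Real.sqrt (1 + 4 * t k ^ 2)) / 2)
    (hα : ∀ k, 1 ≤ k → α k = (t k - 1) / t (k + 1)) :
    ∃! xs : Fin n → ℝ,
      ∀ x y : ℕ → Fin n → ℝ,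
        y 1 = x 0 →
        (∀ k, 1 ≤ k → x k = W *ᵥ (y k - γ • (Aᵀ *ᵥ (A *ᵥ y k - b)))) →
        (∀ k, 1 ≤ k → y (k + 1) = x k + α k • (x k - x (k - 1))) →
        ∃ C, 0 < C ∧ ∃ β, 0 ≤ β ∧ β < 1 ∧ ∃ K, 1 ≤ K ∧ ∀ k, K ≤ k →
          norm2 (x k - xs) ≤ C * β ^ k := by
  have hW' : W ∈ rowStochastic ℝ (Fin n) := mem_rowStochastic_iff_sum.2 ⟨hnonneg, hrow⟩
  have hirr' : W.IsIrreducible := (isIrreducible_iff_exists_pow_pos hnonneg).2 hirr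
  exact stmt16_general ⟨hW.nonneg, matrix_le_one_of_mem_rowStochastic hW' hW.isHermitian⟩
    (fun _ => eq_zero_of_mulVec_eq_self_of_mulVec_eq_zero hW' hirr' hA1) b hγ0
    (mul_lamMax_le_one_of_lt_one_div hγ1) fun _ => fista_momentum_mem_Icc ht1 ht hα
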